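/- Let n be an integer, let F be a forest on n vertices with maximum degree Δ satisfying 15 < Δ < n/2, and let c : E(K_n) → {−1, +1} be a balanced colouring of the edges of K_n. Then there exists a copy F' of F in K_n such that |c(F')| ≤ (Δ − n/4 + 3)/2 + √( (Δ − n/4 + 1)²/4 + 4n ). -/

import Mathlib

/-!
Identify copies of `F` with permutations and suppose that every colour sum exceeds `t + 1` in
absolute value. Fix a vertex `v` of degree at most one. Exchanging the images of `u` and `v` alters
only the stars at `u` and `v`, so it can change the sign of the sum only if `deg u > t`; such
vertices `u`, the pivots, number at most `2n / t`. There is a pivot, because the colour sums average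
to zero, and the sign of the sum depends only on where the pivots go.

Choose a pivot `u` with at most one neighbour among the pivots and fix the images of the others. The
remaining positions for `u` split into a part `X`, where the sum is negative, and a part `Y`, where
it is positive. Placing the neighbours of `u` adversarially shows that, for `x ∈ X` and `y ∈ Y`, all
but `Δ - t` of the remaining vertices are joined to `x` by colour `-1` and to `y` by colour `1`. By
double counting, one of `X` and `Y` is then small and the vertices of the other have few edges of
one colour. As that colour makes up half of all edges, `(n - 1) / 4 ≤ Δ - t + #pivots`, which fails
for the value of `t` in the theorem.
-/

open Finset Equiv

section Forest

variable {V : Type*} [Fintype V] {F : SimpleGraph V} [DecidableRel F.Adj]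

theorem card_edgeFinset_lt_card_of_isAcyclic [Nonempty V] (hF : F.IsAcyclic) :
    #F.edgeFinset < Fintype.card V := by
  classical
  obtain ⟨T, hFT, -, hT⟩ :=
    SimpleGraph.connected_top.exists_isTree_le_of_le_of_isAcyclic (le_top (a := F)) hF
  calc #F.edgeFinset ≤ #T.edgeFinset := card_le_card (SimpleGraph.edgeFinset_mono hFT)
    _ < Fintype.card V := by have := hT.card_edgeFinset; lia

theorem sum_degrees_lt_of_isAcyclic [Nonempty V] (hF : F.IsAcyclic) :
    ∑ a, F.degree a < 2 * Fintype.card V := by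
  rw [F.sum_degrees_eq_twice_card_edges]
  have := card_edgeFinset_lt_card_of_isAcyclic hF
  lia

theorem exists_degree_le_one_of_isAcyclic [Nonempty V] (hF : F.IsAcyclic) :
    ∃ v, F.degree v ≤ 1 := by
  have hsum : ∑ a, F.degree a < ∑ _a : V, 2 := by
    simpa [mul_comm] using sum_degrees_lt_of_isAcyclic hF
  obtain ⟨v, -, hv⟩ := exists_lt_of_sum_lt hsum
  exact ⟨v, Nat.le_of_lt_succ hv⟩

theorem exists_mem_card_neighborFinset_inter_le_one_of_isAcyclic [DecidableEq V]
    (hF : F.IsAcyclic) {U : Finset V} (hU : U.Nonempty) :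
    ∃ u ∈ U, #(F.neighborFinset u ∩ U) ≤ 1 := by
  have : Nonempty (U : Set V) := hU.to_subtype
  obtain ⟨u, hu⟩ := exists_degree_le_one_of_isAcyclic (hF.induce (U : Set V))
  refine ⟨u, u.2, ?_⟩
  have hmap : ((F.induce (U : Set V)).neighborFinset u).map (.subtype (· ∈ (U : Set V))) =
      F.neighborFinset u ∩ U := by
    ext
    simp [and_comm]
  rwa [← hmap, card_map, SimpleGraph.card_neighborFinset_eq_degree]

end Forest

section Counting

theorem exists_min_card_le_card_bipartiteBelow_add_card_bipartiteAbove_not {α β : Type*}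
    (r : α → β → Prop) [∀ a b, Decidable (r a b)] {X : Finset α} {Y : Finset β}
    (hX : X.Nonempty) (hY : Y.Nonempty) :
    ∃ x ∈ X, ∃ y ∈ Y,
      min #X #Y ≤ #(X.bipartiteBelow r y) + #(Y.bipartiteAbove (fun a b ↦ ¬r a b) x) := by
  by_contra! hlt
  have hcompl : ∑ x ∈ X, (#(Y.bipartiteAbove r x) + #(Y.bipartiteAbove (fun a b ↦ ¬r a b) x)) =
      #X * #Y := by
    simp [bipartiteAbove, card_filter_add_card_filter_not]
  have hsum : ∑ x ∈ X, ∑ y ∈ Y,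
      (#(X.bipartiteBelow r y) + #(Y.bipartiteAbove (fun a b ↦ ¬r a b) x)) <
        ∑ _x ∈ X, ∑ _y ∈ Y, min #X #Y :=
    sum_lt_sum_of_nonempty hX fun x hx ↦ sum_lt_sum_of_nonempty hY fun y hy ↦ hlt x hx y hy
  simp only [sum_add_distrib, sum_const, smul_eq_mul, ← mul_sum] at hsum hcompl
  rw [← sum_card_bipartiteAbove_eq_sum_card_bipartiteBelow, ← mul_assoc, ← hcompl, add_mul] at hsum
  refine hsum.not_ge (add_le_add ?_ ?_)
  · rw [mul_comm]
    gcongr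
    exact min_le_left _ _
  · rw [mul_comm]
    gcongr
    exact min_le_right _ _

variable {V : Type*} [DecidableEq V]

/-- The vertices of `S` that do not tell `x` and `y` apart in the prescribed way: `w ∈ S \ {x, y}`
is left out exactly when it is adjacent to `x` and not to `y`. -/
def nonSeparators (R : SimpleGraph V) [DecidableRel R.Adj] (S : Finset V) (x y : V) : Finset V :=
  {w ∈ S \ {x, y} | ¬(R.Adj x w ∧ ¬R.Adj y w)}

variable {R : SimpleGraph V} [DecidableRel R.Adj] {X Y : Finset V} {μ : ℝ}

theorem nonSeparators_compl (S : Finset V) (x y : V) :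
    nonSeparators Rᶜ S y x = nonSeparators R S x y := by
  ext w
  simp only [nonSeparators, mem_filter, mem_sdiff, mem_insert, mem_singleton,
    SimpleGraph.compl_adj]
  grind

theorem min_card_le_of_card_nonSeparators_le (hX : X.Nonempty) (hY : Y.Nonempty)
    (hXY : Disjoint X Y) (hμ : ∀ x ∈ X, ∀ y ∈ Y, (#(nonSeparators R (X ∪ Y) x y) : ℝ) ≤ μ) :
    (min #X #Y : ℝ) ≤ μ + 1 := by
  obtain ⟨x, hx, y, hy, hmin⟩ :=
    exists_min_card_le_card_bipartiteBelow_add_card_bipartiteAbove_not R.Adj hX hY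
  have hdisj : Disjoint (X.bipartiteBelow R.Adj y) (Y.bipartiteAbove (fun a b ↦ ¬R.Adj a b) x) :=
    hXY.mono (filter_subset _ _) (filter_subset _ _)
  have hsub : X.bipartiteBelow R.Adj y ∪ Y.bipartiteAbove (fun a b ↦ ¬R.Adj a b) x ⊆
      insert (if R.Adj x y then x else y) (nonSeparators R (X ∪ Y) x y) := by
    intro w hw
    have hne : ∀ a ∈ X, ∀ b ∈ Y, a ≠ b := disjoint_iff_ne.1 hXY
    simp only [nonSeparators, mem_union, mem_bipartiteBelow, mem_bipartiteAbove, mem_insert,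
      mem_filter, mem_sdiff, mem_singleton] at hw ⊢
    grind [R.adj_comm w y]
  have hcard : min #X #Y ≤ #(nonSeparators R (X ∪ Y) x y) + 1 := by
    rw [← card_union_of_disjoint hdisj] at hmin
    exact hmin.trans ((card_le_card hsub).trans (card_insert_le _ _))
  calc (min #X #Y : ℝ) ≤ #(nonSeparators R (X ∪ Y) x y) + 1 := mod_cast hcard
    _ ≤ μ + 1 := by gcongr; exact hμ x hx y hy

variable [Fintype V]

theorem degree_le_card_nonSeparators_add (S : Finset V) (x y : V) :
    R.degree y ≤ #(nonSeparators R S x y) + 1 + #Sᶜ := by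
  have hsub : R.neighborFinset y ⊆ insert x (nonSeparators R S x y) ∪ Sᶜ := by
    intro w hw
    have := R.ne_of_adj ((R.mem_neighborFinset y w).1 hw)
    simp only [nonSeparators, SimpleGraph.mem_neighborFinset, mem_union, mem_insert, mem_filter,
      mem_sdiff, mem_singleton, mem_compl] at hw ⊢
    grind
  rw [← R.card_neighborFinset_eq_degree]
  grw [card_le_card hsub, card_union_le, card_insert_le]

theorem card_edgeFinset_le_of_card_nonSeparators_le_of_card_le (hX : X.Nonempty) (hY : Y.Nonempty)
    (hXY : Disjoint X Y) (hμ : ∀ x ∈ X, ∀ y ∈ Y, (#(nonSeparators R (X ∪ Y) x y) : ℝ) ≤ μ)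
    (hle : #X ≤ #Y) :
    (#R.edgeFinset : ℝ) ≤ Fintype.card V * (μ + 1 + #(X ∪ Y)ᶜ) := by
  obtain ⟨x, hx⟩ := hX
  have hdeg : ∀ y ∈ Y, (R.degree y : ℝ) ≤ μ + 1 + #(X ∪ Y)ᶜ := fun y hy ↦
    calc (R.degree y : ℝ) ≤ #(nonSeparators R (X ∪ Y) x y) + 1 + #(X ∪ Y)ᶜ :=
          mod_cast degree_le_card_nonSeparators_add _ x y
      _ ≤ μ + 1 + #(X ∪ Y)ᶜ := by gcongr; exact hμ x hx y hy
  have hcompl : (#Yᶜ : ℝ) ≤ μ + 1 + #(X ∪ Y)ᶜ := by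
    have hXcard := min_card_le_of_card_nonSeparators_le ⟨x, hx⟩ hY hXY hμ
    have hsub : Yᶜ ⊆ X ∪ (X ∪ Y)ᶜ := by intro w; simp; tauto
    have hcard : (#Yᶜ : ℝ) ≤ #X + #(X ∪ Y)ᶜ :=
      mod_cast (card_le_card hsub).trans (card_union_le _ _)
    rw [min_eq_left (mod_cast hle)] at hXcard
    linarith
  have hdouble :
      2 * (#R.edgeFinset : ℝ) = ∑ a ∈ Y, (R.degree a : ℝ) + ∑ a ∈ Yᶜ, (R.degree a : ℝ) := by
    rw [sum_add_sum_compl]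
    exact_mod_cast R.sum_degrees_eq_twice_card_edges.symm
  have hsumY : ∑ a ∈ Y, (R.degree a : ℝ) ≤ Fintype.card V * (μ + 1 + #(X ∪ Y)ᶜ) := by
    grw [sum_le_card_nsmul _ _ _ hdeg, nsmul_eq_mul, card_le_univ Y]
    exact (Nat.cast_nonneg _).trans hcompl
  have hsumYc : ∑ a ∈ Yᶜ, (R.degree a : ℝ) ≤ Fintype.card V * (μ + 1 + #(X ∪ Y)ᶜ) := by
    have hcardV : ∀ a ∈ Yᶜ, (R.degree a : ℝ) ≤ Fintype.card V :=
      fun a _ ↦ mod_cast (R.degree_lt_card_verts a).le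
    grw [sum_le_card_nsmul _ _ _ hcardV, nsmul_eq_mul, hcompl, mul_comm]
  linarith

theorem card_edgeFinset_le_or_compl_le_of_card_nonSeparators_le (hX : X.Nonempty)
    (hY : Y.Nonempty) (hXY : Disjoint X Y)
    (hμ : ∀ x ∈ X, ∀ y ∈ Y, (#(nonSeparators R (X ∪ Y) x y) : ℝ) ≤ μ) :
    (#R.edgeFinset : ℝ) ≤ Fintype.card V * (μ + 1 + #(X ∪ Y)ᶜ) ∨
      (#Rᶜ.edgeFinset : ℝ) ≤ Fintype.card V * (μ + 1 + #(X ∪ Y)ᶜ) := by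
  rcases le_total #X #Y with hle | hle
  · exact .inl (card_edgeFinset_le_of_card_nonSeparators_le_of_card_le hX hY hXY hμ hle)
  · rw [union_comm] at hμ ⊢
    refine .inr (card_edgeFinset_le_of_card_nonSeparators_le_of_card_le hY hX hXY.symm ?_ hle)
    intro y hy x hx
    rw [nonSeparators_compl]
    exact hμ x hx y hy

theorem card_edgeFinset_add_card_edgeFinset_compl (R : SimpleGraph V) [DecidableRel R.Adj] :
    #R.edgeFinset + #Rᶜ.edgeFinset = (Fintype.card V).choose 2 := by
  rw [← card_union_of_disjoint (SimpleGraph.disjoint_edgeFinset.2 disjoint_compl_right),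
    ← SimpleGraph.edgeFinset_sup, ← SimpleGraph.card_edgeFinset_top_eq_card_choose_two]
  congr! 2
  exact sup_compl_eq_top

end Counting

section Permutation

variable {V : Type*}

theorem exists_perm_eqOn_image_eq [Finite V] [DecidableEq V] {f : V → V}
    {W A B : Finset V} (hf : Set.InjOn f W) (hA : Disjoint A W) (hB : Disjoint B (W.image f))
    (hAB : #A = #B) : ∃ ρ : Perm V, Set.EqOn ρ f W ∧ A.image ρ = B := by
  have := Fintype.ofFinite V
  cases isEmpty_or_nonempty V
  · exact ⟨1, fun a ↦ isEmptyElim a, Subsingleton.elim _ _⟩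
  obtain ⟨g, hg⟩ := A.finite_toSet.exists_bijOn_of_encard_eq (t := (B : Set V)) (by simp [hAB])
  have hgA : Set.EqOn (A.piecewise g f) g A :=
    fun _ ha ↦ A.piecewise_eq_of_mem g f ha
  have hfW : Set.EqOn (A.piecewise g f) f W :=
    fun a ha ↦ A.piecewise_eq_of_notMem g f (disjoint_right.1 hA ha)
  have hinj : Set.InjOn (A.piecewise g f) (A ∪ W : Set V) := by
    refine (Set.injOn_union (disjoint_coe.2 hA)).2
      ⟨hgA.injOn_iff.2 hg.injOn, hfW.injOn_iff.2 hf, fun a ha b hb ↦ ?_⟩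
    rw [hgA ha, hfW hb]
    exact disjoint_iff_ne.1 hB _ (hg.mapsTo ha) _ (mem_image_of_mem f hb)
  obtain ⟨ρ, hρ⟩ := Set.MapsTo.exists_equiv_extend_of_card_eq (t := univ) card_univ.symm
    (fun _ _ ↦ mem_coe.2 (mem_univ _)) hinj
  refine ⟨ρ.trans (subtypeUnivEquiv mem_univ), fun a ha ↦ ?_, ?_⟩
  · exact (hρ a (.inr ha)).trans (hfW ha)
  · rw [← coe_inj, coe_image, ← hg.image_eq]
    exact Set.image_congr fun a ha ↦ (hρ a (.inl ha)).trans (hgA ha)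

theorem exists_perm_eqOn_apply_eq_apply_eq_image_eq [Finite V] [DecidableEq V] (π : Perm V)
    {W A B : Finset V} {u v x y : V} (huv : u ≠ v) (hu : u ∉ W) (hv : v ∉ W) (hxy : x ≠ y)
    (hx : x ∉ W.image π) (hy : y ∉ W.image π) (hA : Disjoint A (W ∪ {u, v}))
    (hB : Disjoint B (W.image π ∪ {x, y})) (hAB : #A = #B) :
    ∃ ρ : Perm V, Set.EqOn ρ π W ∧ ρ u = x ∧ ρ v = y ∧ A.image ρ = B := by
  let f := Function.update (Function.update π u x) v y
  have hfW : Set.EqOn f π W := fun a ha ↦ by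
    simp [f, ne_of_mem_of_not_mem ha hu, ne_of_mem_of_not_mem ha hv]
  have hfu : f u = x := by simp [f, huv]
  have hfv : f v = y := by simp [f]
  have hinj : Set.InjOn f ↑(W ∪ {u, v}) := by
    simp only [mem_image, not_exists, not_and] at hx hy
    intro a ha b hb hab
    have := π.injective.eq_iff (a := a) (b := b)
    grind
  have himage : (W ∪ {u, v}).image f = W.image π ∪ {x, y} := by
    rw [image_union, image_congr hfW, image_insert, image_singleton, hfu, hfv]
  obtain ⟨ρ, hρ, hρA⟩ := exists_perm_eqOn_image_eq hinj hA (himage ▸ hB) hAB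
  exact ⟨ρ, fun a ha ↦ (hρ (by simp [mem_coe.1 ha])).trans (hfW ha),
    (hρ (by simp)).trans hfu, (hρ (by simp)).trans hfv, hρA⟩

theorem mem_of_forall_swap_mem [Finite V] [DecidableEq V] {G : Subgroup (Perm V)} {U : Set V}
    {v : V} (hG : ∀ a ∉ U, swap a v ∈ G) {g : Perm V} (hg : ∀ a ∈ U, g a = a) : g ∈ G := by
  let S : Set (Perm V) := {σ | σ.IsSwap ∧ σ ∈ G}
  suffices g ∈ Subgroup.closure S from (Subgroup.closure_le G).2 (fun _ hσ ↦ hσ.2) this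
  refine (mem_closure_isSwap fun _ hσ ↦ hσ.1).2 ⟨Set.toFinite _, fun a ↦ ?_⟩
  rcases eq_or_ne (g a) a with hfix | hmove
  · rw [hfix]
    exact MulAction.mem_orbit_self a
  · have ha : a ∉ U := fun h ↦ hmove (hg a h)
    have hga : g a ∉ U := fun h ↦ hmove (g.injective (hg (g a) h))
    have hswap : swap (g a) a ∈ G :=
      SubmonoidClass.swap_mem_trans G (hG _ hga) (swap_comm a v ▸ hG a ha)
    exact (swap_mem_closure_isSwap fun _ hσ ↦ hσ.1).1
      (Subgroup.subset_closure ⟨⟨g a, a, hmove, rfl⟩, hswap⟩)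

/-- The subgroup of those `g` for which right translation by `g` maps `s` onto itself. -/
def rightStabilizer {G : Type*} [Group G] (s : Set G) : Subgroup G where
  carrier := {g | ∀ x, x * g ∈ s ↔ x ∈ s}
  one_mem' x := by rw [mul_one]
  mul_mem' {g h} hg hh x := by rw [← mul_assoc, hh, hg]
  inv_mem' {g} hg x := by rw [← hg, inv_mul_cancel_right]

variable [Fintype V] [DecidableEq V] {s : Set (Perm V)} {u v : V}

open scoped Classical in
/-- The vertices whose transposition with `v` does not preserve membership in `s`. As `s` will
consist of the copies with positive colour sum, these are the vertices at which moving to `v` can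
change the sign. -/
noncomputable def pivots (s : Set (Perm V)) (v : V) : Finset V :=
  {a | swap a v ∉ rightStabilizer s}

theorem mem_pivots : u ∈ pivots s v ↔ swap u v ∉ rightStabilizer s := by
  simp [pivots]

theorem self_notMem_pivots : v ∉ pivots s v := by
  simp [mem_pivots, ← Perm.one_def, one_mem]

theorem mem_iff_mem_of_eqOn_pivots {ρ σ : Perm V} (h : Set.EqOn ρ σ (pivots s v)) :
    ρ ∈ s ↔ σ ∈ s := by
  have hmem : σ⁻¹ * ρ ∈ rightStabilizer s := by
    refine mem_of_forall_swap_mem (U := pivots s v) (v := v) (by simp [mem_pivots]) fun a ha ↦ ?_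
    rw [Perm.mul_apply, Perm.inv_eq_iff_eq, h ha]
  simpa using hmem σ

theorem mem_iff_mem_of_eqOn_erase_pivots {ρ σ : Perm V} (hu : ρ u = σ u)
    (h : Set.EqOn ρ σ ((pivots s v).erase u)) : ρ ∈ s ↔ σ ∈ s := by
  refine mem_iff_mem_of_eqOn_pivots (v := v) fun a ha ↦ ?_
  rcases eq_or_ne a u with rfl | hau
  · exact hu
  · exact h (mem_erase.2 ⟨hau, ha⟩)

theorem exists_notMem_mul_swap_mem_of_mem_pivots (hu : u ∈ pivots s v) :
    ∃ π ∉ s, π * swap u v ∈ s := by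
  obtain ⟨π, hπ⟩ : ∃ π, ¬(π * swap u v ∈ s ↔ π ∈ s) :=
    not_forall.1 (mem_pivots.1 hu)
  by_cases hmem : π ∈ s
  · exact ⟨π * swap u v, by tauto, by simpa [mul_assoc] using hmem⟩
  · exact ⟨π, hmem, by tauto⟩

theorem exists_partition_of_mem_pivots (hu : u ∈ pivots s v) :
    ∃ (π : Perm V) (X Y : Finset V), X.Nonempty ∧ Y.Nonempty ∧ Disjoint X Y ∧
      X ∪ Y = (((pivots s v).erase u).image π)ᶜ ∧
      ∀ x ∈ X, ∀ y ∈ Y, ∀ ρ : Perm V, Set.EqOn ρ π ((pivots s v).erase u) → ρ u = x → ρ v = y →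
        ρ ∉ s ∧ ρ * swap u v ∈ s := by
  classical
  set W := (pivots s v).erase u
  have huW : u ∉ W := notMem_erase u _
  have hvW : v ∉ W := fun h ↦ self_notMem_pivots (mem_of_mem_erase h)
  obtain ⟨π, hπ, hπswap⟩ := exists_notMem_mul_swap_mem_of_mem_pivots hu
  have hswap : ∀ ρ : Perm V, Set.EqOn ρ π W → Set.EqOn (ρ * swap u v) π W := fun ρ hρ a ha ↦ by
    rw [Perm.mul_apply, swap_apply_of_ne_of_ne (ne_of_mem_of_not_mem ha huW)
      (ne_of_mem_of_not_mem ha hvW), hρ ha]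
  let P : V → Prop := fun p ↦ ∃ ρ : Perm V, Set.EqOn ρ π W ∧ ρ u = p ∧ ρ ∈ s
  have hPmem : ∀ ρ : Perm V, Set.EqOn ρ π W → (P (ρ u) ↔ ρ ∈ s) := fun ρ hρ ↦
    ⟨fun ⟨σ, hσ, hσu, hσs⟩ ↦
      (mem_iff_mem_of_eqOn_erase_pivots hσu.symm (hρ.trans hσ.symm)).2 hσs, fun h ↦ ⟨ρ, hρ, rfl, h⟩⟩
  have hPswap : ∀ ρ : Perm V, Set.EqOn ρ π W → (P (ρ v) ↔ ρ * swap u v ∈ s) := fun ρ hρ ↦ by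
    simpa using hPmem _ (hswap ρ hρ)
  refine ⟨π, {p ∈ (W.image π)ᶜ | ¬P p}, {p ∈ (W.image π)ᶜ | P p}, ⟨π u, ?_⟩, ⟨π v, ?_⟩,
    (disjoint_filter_filter_not _ _ _).symm,
    (union_comm _ _).trans (filter_union_filter_not_eq _ _), ?_⟩
  · simpa [huW, hPmem π (Set.eqOn_refl _ _)] using hπ
  · simpa [hvW, hPswap π (Set.eqOn_refl _ _)] using hπswap
  · rintro x hx y hy ρ hρ rfl rfl
    exact ⟨(hPmem ρ hρ).not.1 (mem_filter.1 hx).2, (hPswap ρ hρ).1 (mem_filter.1 hy).2⟩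

end Permutation

section Colouring

variable {V : Type*}

/-- A colouring of the edges of the complete graph on `V` by `1` and `-1`. It is a function on all
of `Sym2 V`, whose values on the diagonal are arbitrary. -/
def IsSignColouring (c : Sym2 V → ℤ) : Prop :=
  ∀ e ∈ (⊤ : SimpleGraph V).edgeSet, c e = 1 ∨ c e = -1

/-- The graph formed by the edges of colour `-1`. -/
def negGraph (c : Sym2 V → ℤ) : SimpleGraph V :=
  .fromEdgeSet {e | c e = -1}

variable {c : Sym2 V → ℤ}

theorem negGraph_adj {a b : V} : (negGraph c).Adj a b ↔ c s(a, b) = -1 ∧ a ≠ b :=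
  SimpleGraph.fromEdgeSet_adj _

theorem IsSignColouring.eq_one_or_eq_neg_one (hc : IsSignColouring c) {a b : V} (hab : a ≠ b) :
    c s(a, b) = 1 ∨ c s(a, b) = -1 :=
  hc s(a, b) (by simpa using hab)

theorem IsSignColouring.sub_le_two (hc : IsSignColouring c) {x y w : V} (hx : w ≠ x) (hy : w ≠ y) :
    c s(y, w) - c s(x, w) ≤ 2 := by
  have := hc.eq_one_or_eq_neg_one hx.symm
  have := hc.eq_one_or_eq_neg_one hy.symm
  lia

variable [DecidableEq V]

instance : DecidableRel (negGraph c).Adj := fun _ _ ↦ decidable_of_iff _ negGraph_adj.symm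

theorem IsSignColouring.sub_nonpos_of_mem_nonSeparators (hc : IsSignColouring c) {S : Finset V}
    {x y w : V} (hw : w ∈ nonSeparators (negGraph c) S x y) : c s(y, w) - c s(x, w) ≤ 0 := by
  simp only [nonSeparators, mem_filter, mem_sdiff, mem_insert, mem_singleton, not_or,
    negGraph_adj] at hw
  have := hc.eq_one_or_eq_neg_one (Ne.symm hw.1.2.1)
  have := hc.eq_one_or_eq_neg_one (Ne.symm hw.1.2.2)
  grind

variable [Fintype V]

theorem edgeFinset_negGraph :
    (negGraph c).edgeFinset = {e ∈ (⊤ : SimpleGraph V).edgeFinset | c e = -1} := by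
  ext e
  induction e with | _ a b
  simp [negGraph_adj, and_comm]

theorem IsSignColouring.two_mul_card_edgeFinset_negGraph (hc : IsSignColouring c)
    (hbal : ∑ e ∈ (⊤ : SimpleGraph V).edgeFinset, c e = 0) :
    2 * #(negGraph c).edgeFinset = (Fintype.card V).choose 2 := by
  have hval : ∀ e ∈ (⊤ : SimpleGraph V).edgeFinset, c e = 1 - 2 * if c e = -1 then 1 else 0 :=
    fun e he ↦ by rcases hc e (SimpleGraph.mem_edgeFinset.1 he) with h | h <;> simp [h]
  rw [sum_congr rfl hval, sum_sub_distrib, ← mul_sum, sum_boole, ← edgeFinset_negGraph, sum_const,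
    SimpleGraph.card_edgeFinset_top_eq_card_choose_two, nsmul_one] at hbal
  lia

theorem IsSignColouring.card_sub_one_div_four_le [Nonempty V] (hc : IsSignColouring c)
    (hbal : ∑ e ∈ (⊤ : SimpleGraph V).edgeFinset, c e = 0) {X Y : Finset V} {μ : ℝ}
    (hX : X.Nonempty) (hY : Y.Nonempty) (hXY : Disjoint X Y)
    (hμ : ∀ x ∈ X, ∀ y ∈ Y, (#(nonSeparators (negGraph c) (X ∪ Y) x y) : ℝ) ≤ μ) :
    ((Fintype.card V : ℝ) - 1) / 4 ≤ μ + 1 + #(X ∪ Y)ᶜ := by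
  have hcard : (0 : ℝ) < Fintype.card V := mod_cast Fintype.card_pos
  have hneg : (2 * #(negGraph c).edgeFinset : ℝ) =
      Fintype.card V * ((Fintype.card V : ℝ) - 1) / 2 := by
    rw [← Nat.cast_choose_two]
    exact_mod_cast hc.two_mul_card_edgeFinset_negGraph hbal
  have hcompl : #(negGraph c)ᶜ.edgeFinset = #(negGraph c).edgeFinset := by
    have := hc.two_mul_card_edgeFinset_negGraph hbal
    have := card_edgeFinset_add_card_edgeFinset_compl (negGraph c)
    lia
  have hedges := card_edgeFinset_le_or_compl_le_of_card_nonSeparators_le hX hY hXY hμ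
  rw [hcompl, or_self] at hedges
  refine le_of_mul_le_mul_left ?_ hcard
  linarith

end Colouring

section Copy

variable {V : Type*}

theorem map_swap_of_notMem [DecidableEq V] {u v : V} {e : Sym2 V} (hu : u ∉ e) (hv : v ∉ e) :
    e.map (swap u v) = e := by
  induction e with | _ a b
  simp only [Sym2.mem_iff, not_or] at hu hv
  simp [swap_apply_of_ne_of_ne (Ne.symm hu.1) (Ne.symm hv.1),
    swap_apply_of_ne_of_ne (Ne.symm hu.2) (Ne.symm hv.2)]

theorem exists_perm_map_eq {e f : Sym2 V} (he : ¬e.IsDiag) (hf : ¬f.IsDiag) :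
    ∃ σ : Perm V, e.map σ = f := by
  induction e with | _ a b
  induction f with | _ x y
  have := Perm.isMultiplyPretransitive V 2
  obtain ⟨σ, hx, hy⟩ := MulAction.is_two_pretransitive_iff.1 this he hf
  exact ⟨σ, by simpa using .inl ⟨hx, hy⟩⟩

variable [Fintype V] [DecidableEq V]

/-- The sum of the colours over the edges of the copy of `F` placed by the permutation `π`. -/
def copySum (F : SimpleGraph V) [DecidableRel F.Adj] (c : Sym2 V → ℤ) (π : Perm V) : ℤ :=
  ∑ e ∈ F.edgeFinset, c (e.map π)

/-- The change of the colour sum of the copy `π` of `F` when the centre of the star of `F` at `u`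
moves from `π u` to `π v`, all leaves staying in place; a possible edge from `u` to `v` is
ignored. -/
def starGain (F : SimpleGraph V) [DecidableRel F.Adj] (c : Sym2 V → ℤ) (π : Perm V) (u v : V) : ℤ :=
  ∑ b ∈ (F.neighborFinset u).erase v, (c s(π v, π b) - c s(π u, π b))

/-- The permutations placing a copy of `F` with positive colour sum. -/
def positiveCopies (F : SimpleGraph V) [DecidableRel F.Adj] (c : Sym2 V → ℤ) : Set (Perm V) :=
  {π | 0 < copySum F c π}

variable {F : SimpleGraph V} [DecidableRel F.Adj] {c : Sym2 V → ℤ} {u v : V}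

theorem sum_edgeFinset_eq_sum_neighborFinset_erase {M : Type*} [AddCommMonoid M] {g : Sym2 V → M}
    (huv : u ≠ v) (hg : ∀ e, u ∉ e → v ∉ e → g e = 0) (hguv : g s(u, v) = 0) :
    ∑ e ∈ F.edgeFinset, g e = ∑ b ∈ (F.neighborFinset u).erase v, g s(u, b) +
      ∑ b ∈ (F.neighborFinset v).erase u, g s(v, b) := by
  have hinj (a : V) : Function.Injective fun b ↦ s(a, b) := fun _ _ ↦ Sym2.congr_right.1
  set A := ((F.neighborFinset u).erase v).image (fun b ↦ s(u, b))
  set B := ((F.neighborFinset v).erase u).image (fun b ↦ s(v, b))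
  have hdisj : Disjoint A B := by
    simp only [A, B, disjoint_left, mem_image, mem_erase]
    grind
  have hsub : A ∪ B ⊆ F.edgeFinset := by
    intro e he
    simp only [A, B, mem_union, mem_image, mem_erase, SimpleGraph.mem_neighborFinset] at he
    rcases he with ⟨b, hb, rfl⟩ | ⟨b, hb, rfl⟩ <;> simpa using hb.2
  have hzero : ∀ e ∈ F.edgeFinset, e ∉ A ∪ B → g e = 0 := by
    intro e he heAB
    by_cases hu : u ∈ e
    · obtain ⟨b, rfl⟩ := hu
      grind [SimpleGraph.mem_edgeFinset, SimpleGraph.mem_edgeSet, SimpleGraph.mem_neighborFinset]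
    by_cases hv : v ∈ e
    · obtain ⟨b, rfl⟩ := hv
      grind [SimpleGraph.mem_edgeFinset, SimpleGraph.mem_edgeSet, SimpleGraph.mem_neighborFinset]
    · exact hg e hu hv
  rw [← sum_subset hsub hzero, sum_union hdisj, sum_image (hinj u).injOn, sum_image (hinj v).injOn]

theorem starGain_eq_sum_map_mul_swap (π : Perm V) (u v : V) :
    starGain F c π u v = ∑ b ∈ (F.neighborFinset u).erase v,
      (c (s(u, b).map (π * swap u v)) - c (s(u, b).map π)) := by
  refine sum_congr rfl fun b hb ↦ ?_
  have hub : F.Adj u b := by simpa using mem_of_mem_erase hb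
  simp [swap_apply_of_ne_of_ne hub.ne' (ne_of_mem_erase hb)]

theorem copySum_mul_swap (π : Perm V) (huv : u ≠ v) :
    copySum F c (π * swap u v) = copySum F c π + starGain F c π u v + starGain F c π v u := by
  have havoid (e : Sym2 V) (hu : u ∉ e) (hv : v ∉ e) :
      c (e.map (π * swap u v)) - c (e.map π) = 0 := by
    rw [Perm.coe_mul, ← Sym2.map_map, map_swap_of_notMem hu hv, sub_self]
  have hedge : c (s(u, v).map (π * swap u v)) - c (s(u, v).map π) = 0 := by
    simp [Sym2.eq_swap]
  rw [add_assoc, ← sub_eq_iff_eq_add', starGain_eq_sum_map_mul_swap, starGain_eq_sum_map_mul_swap,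
    swap_comm v u, copySum, copySum, ← sum_sub_distrib,
    sum_edgeFinset_eq_sum_neighborFinset_erase huv havoid hedge]

theorem sum_perm_map_congr {M : Type*} [AddCommMonoid M] (c : Sym2 V → M) {e f : Sym2 V}
    (he : ¬e.IsDiag) (hf : ¬f.IsDiag) :
    ∑ π : Perm V, c (e.map π) = ∑ π : Perm V, c (f.map π) := by
  obtain ⟨σ, rfl⟩ := exists_perm_map_eq he hf
  exact Fintype.sum_equiv (Equiv.mulRight σ⁻¹) _ _ fun π ↦ by
    simp [Sym2.map_map, Function.comp_def]

theorem sum_edgeFinset_top_map {M : Type*} [AddCommMonoid M] (c : Sym2 V → M) (π : Perm V) :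
    ∑ e ∈ (⊤ : SimpleGraph V).edgeFinset, c (e.map π) =
      ∑ e ∈ (⊤ : SimpleGraph V).edgeFinset, c e := by
  refine sum_bijective (Sym2.map π)
    (Finite.injective_iff_bijective.1 (Sym2.map.injective π.injective)) (fun e ↦ ?_) fun e _ ↦ rfl
  induction e with | _ a b
  simp

theorem sum_perm_map_eq_zero (hbal : ∑ e ∈ (⊤ : SimpleGraph V).edgeFinset, c e = 0)
    {e : Sym2 V} (he : ¬e.IsDiag) : ∑ π : Perm V, c (e.map π) = 0 := by
  have hdouble : ∑ f ∈ (⊤ : SimpleGraph V).edgeFinset, ∑ π : Perm V, c (f.map π) = 0 := by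
    rw [sum_comm]
    simp only [sum_edgeFinset_top_map, hbal, sum_const_zero]
  rw [sum_congr rfl fun f hf ↦ sum_perm_map_congr c (by simpa using hf) he, sum_const,
    smul_eq_zero] at hdouble
  refine hdouble.resolve_left (card_ne_zero_of_mem (a := e) ?_)
  simpa using he

theorem sum_copySum_eq_zero (hbal : ∑ e ∈ (⊤ : SimpleGraph V).edgeFinset, c e = 0) :
    ∑ π : Perm V, copySum F c π = 0 := by
  simp only [copySum]
  rw [sum_comm]
  exact sum_eq_zero fun e he ↦
    sum_perm_map_eq_zero hbal (F.not_isDiag_of_mem_edgeFinset he)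

theorem IsSignColouring.starGain_le_two_mul_card_sdiff_nonSeparators (hc : IsSignColouring c)
    (π : Perm V) (u v : V) (S : Finset V) :
    starGain F c π u v ≤ 2 * #(((F.neighborFinset u).erase v).image π \
      nonSeparators (negGraph c) S (π u) (π v)) := by
  set A := ((F.neighborFinset u).erase v).image π
  set M := nonSeparators (negGraph c) S (π u) (π v)
  have hterm : ∀ w ∈ A, c s(π v, w) - c s(π u, w) ≤ if w ∈ M then 0 else 2 := by
    intro w hw
    split_ifs with hwM
    · exact hc.sub_nonpos_of_mem_nonSeparators hwM
    · obtain ⟨b, hb, rfl⟩ := mem_image.1 hw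
      have hub : F.Adj u b := by simpa using mem_of_mem_erase hb
      exact hc.sub_le_two (π.injective.ne hub.ne') (π.injective.ne (ne_of_mem_erase hb))
  calc starGain F c π u v = ∑ w ∈ A, (c s(π v, w) - c s(π u, w)) :=
        (sum_image (f := fun w ↦ c s(π v, w) - c s(π u, w)) π.injective.injOn).symm
    _ ≤ ∑ w ∈ A, if w ∈ M then 0 else 2 := sum_le_sum hterm
    _ = 2 * #(A \ M) := by simp [sum_ite, sdiff_eq_filter, mul_comm]

theorem IsSignColouring.starGain_le (hc : IsSignColouring c) (π : Perm V) (u v : V) :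
    starGain F c π u v ≤ 2 * F.degree u := by
  refine (hc.starGain_le_two_mul_card_sdiff_nonSeparators π u v ∅).trans ?_
  rw [← F.card_neighborFinset_eq_degree]
  refine mul_le_mul_of_nonneg_left (Nat.cast_le.2 ?_) zero_le_two
  calc _ ≤ #(((F.neighborFinset u).erase v).image π) := card_le_card sdiff_subset
    _ ≤ #((F.neighborFinset u).erase v) := card_image_le
    _ ≤ #(F.neighborFinset u) := card_le_card (erase_subset _ _)

end Copy

section Placement

variable {V : Type*} [Fintype V] [DecidableEq V] {F : SimpleGraph V} [DecidableRel F.Adj]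
  {c : Sym2 V → ℤ} {u v x y : V} {W : Finset V} {π : Perm V}

theorem exists_subset_card_eq_card_sdiff_eq {α : Type*} [DecidableEq α] {M P : Finset α} {k : ℕ}
    (hMP : M ⊆ P) (hk : k ≤ #P) : ∃ K ⊆ P, #K = k ∧ #(K \ M) = k - #M := by
  rcases le_total k #M with h | h
  · obtain ⟨K, hKM, hK⟩ := exists_subset_card_eq h
    exact ⟨K, hKM.trans hMP, hK, by simp [sdiff_eq_empty_iff_subset.2 hKM, h]⟩
  · obtain ⟨K, hMK, hKP, hK⟩ := exists_subsuperset_card_eq hMP h hk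
    exact ⟨K, hKP, hK, by rw [card_sdiff_of_subset hMK, hK]⟩

theorem card_le_card_compl_image_sdiff_pair {A : Finset V} (huv : u ≠ v) (hu : u ∉ W) (hv : v ∉ W)
    (hA : Disjoint A (W ∪ {u, v})) (π : Perm V) (x y : V) : #A ≤ #((W.image π)ᶜ \ {x, y}) := by
  have hcard : #A + (#W + 2) ≤ Fintype.card V := by
    rw [← card_pair huv, ← card_union_of_disjoint (by simp [hu, hv]), ← card_union_of_disjoint hA]
    exact card_le_univ _
  have hle := le_card_sdiff {x, y} (W.image π)ᶜ
  rw [card_compl, card_image_of_injective W π.injective] at hle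
  have := card_le_two (a := x) (b := y)
  lia

theorem disjoint_neighborFinset_sdiff_insert (u v : V) (W : Finset V) :
    Disjoint (F.neighborFinset u \ insert v W) (W ∪ {u, v}) := by
  rw [disjoint_left]
  have := F.notMem_neighborFinset_self u
  grind

-- The neighbours of `u` that are free to move are sent to vertices that do not separate `x` from
-- `y`, as long as there are any.
theorem IsSignColouring.exists_perm_starGain_le (hc : IsSignColouring c) (huv : u ≠ v)
    (hu : u ∉ W) (hv : v ∉ W) (hxy : x ≠ y) (hx : x ∉ W.image π) (hy : y ∉ W.image π) :
    ∃ ρ : Perm V, Set.EqOn ρ π W ∧ ρ u = x ∧ ρ v = y ∧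
      starGain F c ρ u v ≤ 2 * (#(F.neighborFinset u ∩ W) + (#(F.neighborFinset u \ insert v W) -
        #(nonSeparators (negGraph c) (W.image π)ᶜ x y)) : ℕ) := by
  set N := F.neighborFinset u
  set M := nonSeparators (negGraph c) (W.image π)ᶜ x y
  have hdisjN : Disjoint (N \ insert v W) (W ∪ {u, v}) := disjoint_neighborFinset_sdiff_insert u v W
  obtain ⟨K, hKP, hKcard, hKM⟩ := exists_subset_card_eq_card_sdiff_eq (M := M)
    (filter_subset _ _) (card_le_card_compl_image_sdiff_pair huv hu hv hdisjN π x y)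
  have hdisjK : Disjoint K (W.image π ∪ {x, y}) := by
    refine disjoint_of_subset_left hKP (disjoint_left.2 fun w hw ↦ ?_)
    simpa only [mem_sdiff, mem_compl, mem_union, not_or] using hw
  obtain ⟨ρ, hρ, rfl, rfl, hρK⟩ :=
    exists_perm_eqOn_apply_eq_apply_eq_image_eq π huv hu hv hxy hx hy hdisjN hdisjK hKcard.symm
  have hsub : (N.erase v).image ρ \ M ⊆ (N ∩ W).image ρ ∪ K \ M := by
    rw [← hρK]
    grind
  have hcard : #((N.erase v).image ρ \ M) ≤ #(N ∩ W) + (#(N \ insert v W) - #M) :=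
    calc #((N.erase v).image ρ \ M) ≤ #((N ∩ W).image ρ) + #(K \ M) :=
          (card_le_card hsub).trans (card_union_le _ _)
      _ ≤ #(N ∩ W) + (#(N \ insert v W) - #M) := add_le_add card_image_le hKM.le
  exact ⟨ρ, hρ, rfl, rfl, (hc.starGain_le_two_mul_card_sdiff_nonSeparators ρ u v _).trans
    (mul_le_mul_of_nonneg_left (Nat.cast_le.2 hcard) zero_le_two)⟩

theorem IsSignColouring.card_nonSeparators_le (hc : IsSignColouring c) {t : ℝ} (ht : 1 ≤ t)
    (huv : u ≠ v) (hu : u ∉ W) (hv : v ∉ W) (hxy : x ≠ y) (hx : x ∉ W.image π)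
    (hy : y ∉ W.image π) (hW : #(F.neighborFinset u ∩ W) ≤ 1)
    (hgain : ∀ ρ : Perm V, Set.EqOn ρ π W → ρ u = x → ρ v = y → 2 * t < starGain F c ρ u v) :
    (#(nonSeparators (negGraph c) (W.image π)ᶜ x y) : ℝ) ≤ F.degree u - t := by
  obtain ⟨ρ, hρ, hρu, hρv, hle⟩ := hc.exists_perm_starGain_le (F := F) huv hu hv hxy hx hy
  set M := nonSeparators (negGraph c) (W.image π)ᶜ x y
  have hlt : t < (#(F.neighborFinset u ∩ W) + (#(F.neighborFinset u \ insert v W) - #M) : ℕ) := by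
    have := (hgain ρ hρ hρu hρv).trans_le (Int.cast_le.2 hle)
    push_cast at this ⊢
    linarith
  have hsplit : #(F.neighborFinset u ∩ W) + #(F.neighborFinset u \ insert v W) ≤ F.degree u := by
    rw [← F.card_neighborFinset_eq_degree, ← card_union_of_disjoint (by rw [disjoint_left]; grind)]
    exact card_le_card (by grind)
  have hM : #(F.neighborFinset u ∩ W) + (#(F.neighborFinset u \ insert v W) - #M) + #M ≤
      F.degree u := by
    have : 1 < #(F.neighborFinset u ∩ W) + (#(F.neighborFinset u \ insert v W) - #M) :=
      mod_cast ht.trans_lt hlt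
    lia
  have : (_ : ℝ) ≤ _ := Nat.cast_le.2 hM
  push_cast at this hlt
  linarith

end Placement

section Gap

variable {V : Type*} [Fintype V] [DecidableEq V] {F : SimpleGraph V} [DecidableRel F.Adj]
  {c : Sym2 V → ℤ} {t : ℝ} {u v : V}

theorem IsSignColouring.two_mul_lt_starGain (hc : IsSignColouring c)
    (hgap : ∀ π, t + 1 < |(copySum F c π : ℝ)|) (hv : F.degree v ≤ 1) (huv : u ≠ v) {π : Perm V}
    (hπ : π ∉ positiveCopies F c) (hswap : π * swap u v ∈ positiveCopies F c) :
    2 * t < starGain F c π u v := by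
  have hneg : (copySum F c π : ℝ) < -(t + 1) := by
    have h := hgap π
    rw [abs_of_nonpos (mod_cast not_lt.1 hπ)] at h
    linarith
  have hpos : t + 1 < copySum F c (π * swap u v) := by
    have h := hgap (π * swap u v)
    rwa [abs_of_pos (mod_cast hswap)] at h
  have hleaf : (starGain F c π v u : ℝ) ≤ 2 := by
    have := hc.starGain_le (F := F) π v u
    exact_mod_cast (by lia : starGain F c π v u ≤ 2)
  rw [copySum_mul_swap π huv] at hpos
  push_cast at hpos
  linarith

theorem IsSignColouring.lt_degree_of_mem_pivots (hc : IsSignColouring c)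
    (hgap : ∀ π, t + 1 < |(copySum F c π : ℝ)|) (hv : F.degree v ≤ 1)
    (hu : u ∈ pivots (positiveCopies F c) v) : t < F.degree u := by
  obtain ⟨π, hπ, hswap⟩ := exists_notMem_mul_swap_mem_of_mem_pivots hu
  have huv : u ≠ v := ne_of_mem_of_not_mem hu self_notMem_pivots
  have hgain : 2 * t < (2 * F.degree u : ℤ) :=
    (hc.two_mul_lt_starGain hgap hv huv hπ hswap).trans_le (Int.cast_le.2 (hc.starGain_le π u v))
  push_cast at hgain
  linarith

theorem IsSignColouring.card_pivots_mul_le [Nonempty V] (hF : F.IsAcyclic) (hc : IsSignColouring c)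
    (hgap : ∀ π, t + 1 < |(copySum F c π : ℝ)|) (hv : F.degree v ≤ 1) :
    #(pivots (positiveCopies F c) v) * t ≤ 2 * Fintype.card V := by
  calc #(pivots (positiveCopies F c) v) * t
      ≤ ∑ a ∈ pivots (positiveCopies F c) v, (F.degree a : ℝ) := by
        rw [← nsmul_eq_mul]
        exact card_nsmul_le_sum _ _ _ fun a ha ↦ (hc.lt_degree_of_mem_pivots hgap hv ha).le
    _ ≤ ∑ a, (F.degree a : ℝ) := sum_le_univ_sum_of_nonneg fun a ↦ Nat.cast_nonneg _
    _ ≤ 2 * Fintype.card V := mod_cast (sum_degrees_lt_of_isAcyclic hF).le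

theorem pivots_positiveCopies_nonempty (hbal : ∑ e ∈ (⊤ : SimpleGraph V).edgeFinset, c e = 0)
    (hne : ∀ π, copySum F c π ≠ 0) (v : V) : (pivots (positiveCopies F c) v).Nonempty := by
  by_contra! hempty
  have hsign : ∀ π, π ∈ positiveCopies F c ↔ 1 ∈ positiveCopies F c := fun π ↦
    mem_iff_mem_of_eqOn_pivots (v := v) (by simp [hempty])
  by_cases hone : 1 ∈ positiveCopies F c
  · have hpos : 0 < ∑ π : Perm V, copySum F c π :=
      sum_pos (fun π _ ↦ (hsign π).2 hone) univ_nonempty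
    exact hpos.ne' (sum_copySum_eq_zero hbal)
  · have hneg : ∑ π : Perm V, copySum F c π < 0 :=
      sum_neg (fun π _ ↦ (not_lt.1 fun h ↦ hone ((hsign π).1 h)).lt_of_ne (hne π)) univ_nonempty
    exact hneg.ne (sum_copySum_eq_zero hbal)

theorem IsSignColouring.card_sub_one_div_four_le_card_pivots [Nonempty V] (hF : F.IsAcyclic)
    (hc : IsSignColouring c) (hbal : ∑ e ∈ (⊤ : SimpleGraph V).edgeFinset, c e = 0) (ht : 1 ≤ t)
    (hgap : ∀ π, t + 1 < |(copySum F c π : ℝ)|) (hv : F.degree v ≤ 1) :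
    ((Fintype.card V : ℝ) - 1) / 4 ≤ F.maxDegree - t + #(pivots (positiveCopies F c) v) := by
  set U := pivots (positiveCopies F c) v
  have hne (π : Perm V) : copySum F c π ≠ 0 := fun h ↦ by
    have := hgap π
    rw [h, Int.cast_zero, abs_zero] at this
    linarith
  obtain ⟨u, hu, huU⟩ := exists_mem_card_neighborFinset_inter_le_one_of_isAcyclic hF
    (pivots_positiveCopies_nonempty hbal hne v)
  have huv : u ≠ v := ne_of_mem_of_not_mem hu self_notMem_pivots
  have hvW : v ∉ U.erase u := fun h ↦ self_notMem_pivots (mem_of_mem_erase h)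
  have hW : #(F.neighborFinset u ∩ U.erase u) ≤ 1 :=
    (card_le_card (inter_subset_inter_left (erase_subset u U))).trans huU
  obtain ⟨π, X, Y, hX, hY, hXY, hunion, hcross⟩ := exists_partition_of_mem_pivots hu
  have hfree : ∀ p ∈ X ∪ Y, p ∉ (U.erase u).image π := fun p hp ↦ mem_compl.1 (hunion ▸ hp)
  have hμ : ∀ x ∈ X, ∀ y ∈ Y,
      (#(nonSeparators (negGraph c) (X ∪ Y) x y) : ℝ) ≤ F.maxDegree - t := by
    intro x hx y hy
    have hdeg : (F.degree u : ℝ) ≤ F.maxDegree := mod_cast F.degree_le_maxDegree u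
    have hle := hc.card_nonSeparators_le ht huv (notMem_erase u U) hvW
      (disjoint_iff_ne.1 hXY x hx y hy) (hfree x (mem_union_left _ hx))
      (hfree y (mem_union_right _ hy)) hW fun ρ hρ hρu hρv ↦
        have hsign := hcross x hx y hy ρ hρ hρu hρv
        hc.two_mul_lt_starGain hgap hv huv hsign.1 hsign.2
    rw [hunion]
    linarith
  have hmain := hc.card_sub_one_div_four_le hbal hX hY hXY hμ
  have hcard : #(X ∪ Y)ᶜ + 1 = #U := by
    rw [hunion, compl_compl, card_image_of_injective _ π.injective, card_erase_add_one hu]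
  rw [← hcard]
  push_cast
  linarith

theorem IsSignColouring.exists_perm_abs_copySum_le (hF : F.IsAcyclic) (hc : IsSignColouring c)
    (hbal : ∑ e ∈ (⊤ : SimpleGraph V).edgeFinset, c e = 0) (ht : 1 ≤ t)
    (hlt : 2 * (Fintype.card V : ℝ) < t * (t - F.maxDegree + (Fintype.card V - 1) / 4)) :
    ∃ π, |(copySum F c π : ℝ)| ≤ t + 1 := by
  cases isEmpty_or_nonempty V
  · refine ⟨1, ?_⟩
    rw [copySum, eq_empty_of_isEmpty F.edgeFinset, sum_empty, Int.cast_zero, abs_zero]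
    linarith
  by_contra! hgap
  obtain ⟨v, hv⟩ := exists_degree_le_one_of_isAcyclic hF
  have hmany := hc.card_sub_one_div_four_le_card_pivots hF hbal ht hgap hv
  have hfew := hc.card_pivots_mul_le hF hgap hv
  nlinarith

end Gap

theorem almost_balanced_spanning_forest_middle_degree_general {V : Type*} [Fintype V]
    [DecidableEq V] {F : SimpleGraph V} [DecidableRel F.Adj] (hF : F.IsAcyclic) {c : Sym2 V → ℤ}
    (hc : IsSignColouring c) (hbal : ∑ e ∈ (⊤ : SimpleGraph V).edgeFinset, c e = 0) :
    ∃ f : V ↪ V, |(∑ e ∈ F.edgeFinset, c (Sym2.map f e) : ℝ)| ≤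
      ((F.maxDegree : ℝ) - (Fintype.card V : ℝ) / 4 + 3) / 2 +
        √(((F.maxDegree : ℝ) - (Fintype.card V : ℝ) / 4 + 1) ^ 2 / 4 + 4 * Fintype.card V) := by
  -- The asserted bound is `t + 1` for the positive root `t` of `t * (t - D) = 4 * n`.
  set D : ℝ := (F.maxDegree : ℝ) - (Fintype.card V : ℝ) / 4 + 1 with hD
  set t : ℝ := D / 2 + √(D ^ 2 / 4 + 4 * Fintype.card V) with ht_def
  have hcard : (0 : ℝ) ≤ Fintype.card V := Nat.cast_nonneg _
  have hΔ : (0 : ℝ) ≤ F.maxDegree := Nat.cast_nonneg _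
  have hroot : t * (t - D) = 4 * Fintype.card V := by
    have := Real.sq_sqrt (x := D ^ 2 / 4 + 4 * Fintype.card V) (by positivity)
    rw [ht_def]
    linear_combination this
  have ht : 1 ≤ t := by
    have : 1 - D / 2 ≤ √(D ^ 2 / 4 + 4 * Fintype.card V) :=
      Real.le_sqrt_of_sq_le (by nlinarith [hcard, hΔ])
    linarith
  obtain ⟨π, hπ⟩ := hc.exists_perm_abs_copySum_le hF hbal ht (by nlinarith [hcard])
  refine ⟨π.toEmbedding, ?_⟩
  calc |(∑ e ∈ F.edgeFinset, c (Sym2.map π e) : ℝ)| = |(copySum F c π : ℝ)| := by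
        rw [copySum, Int.cast_sum]
    _ ≤ t + 1 := hπ
    _ = _ := by rw [ht_def, hD]; ring

/-- If `c` is a balanced `±1`-colouring of the edges of `K_n` and `F`
is a forest on `n` vertices with maximum degree `Δ` satisfying `15 < Δ < n/2`, then
there is a copy `F'` of `F` in `K_n` with
`|c(F')| ≤ (Δ - n/4 + 3)/2 + √((Δ - n/4 + 1)²/4 + 4n)`. -/
theorem almost_balanced_spanning_forest_middle_degree
    (n : ℕ) (F : SimpleGraph (Fin n)) [DecidableRel F.Adj]
    (hF : F.IsAcyclic) (Δ : ℕ) (hΔ : F.maxDegree = Δ)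
    (hdeg₁ : 15 < Δ) (hdeg₂ : (Δ : ℝ) < (n : ℝ) / 2)
    (c : Sym2 (Fin n) → ℤ)
    (hc : ∀ e ∈ (⊤ : SimpleGraph (Fin n)).edgeFinset, c e = 1 ∨ c e = -1)
    (hbal : ∑ e ∈ (⊤ : SimpleGraph (Fin n)).edgeFinset, c e = 0) :
    ∃ f : Fin n ↪ Fin n,
      |(∑ e ∈ F.edgeFinset, c (Sym2.map (⇑f) e) : ℝ)| ≤
        ((Δ : ℝ) - (n : ℝ) / 4 + 3) / 2 +
          Real.sqrt (((Δ : ℝ) - (n : ℝ) / 4 + 1) ^ 2 / 4 + 4 * n) := by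
  have hsign : IsSignColouring c := fun e he ↦ hc e (SimpleGraph.mem_edgeFinset.2 he)
  simpa only [Fintype.card_fin, hΔ] using
    almost_balanced_spanning_forest_middle_degree_general hF hsign hbal
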